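/- Let G be any of the three minimal 8-vertex Lemke graphs L, L₁, L₂, and let H be either the complete graph K₈ on 8 vertices or the complete bipartite graph K_{4,4}. Then the pebbling number of the Cartesian product satisfies π(G□H) = 64. -/

import Mathlib

open SimpleGraph Finset

/-- A single pebbling move on `G`: remove two pebbles from a vertex `v` with at least two
pebbles and add one pebble to an adjacent vertex `w`. -/
def PebblingMove {V : Type*} (G : SimpleGraph V) (c c' : V → ℕ) : Prop :=
  ∃ v w, G.Adj v w ∧ 2 ≤ c v ∧ c' v = c v - 2 ∧ c' w = c w + 1 ∧
    ∀ u, u ≠ v → u ≠ w → c' u = c u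

/-- Some finite sequence of pebbling moves starting from `c` places at least `t` pebbles
on the vertex `r`. -/
def NSolvable {V : Type*} (G : SimpleGraph V) (c : V → ℕ) (r : V) (t : ℕ) : Prop :=
  ∃ c', Relation.ReflTransGen (PebblingMove G) c c' ∧ t ≤ c' r

/-- A configuration `c` is `r`-solvable. -/
def Solvable {V : Type*} (G : SimpleGraph V) (c : V → ℕ) (r : V) : Prop :=
  NSolvable G c r 1

/-- The pebbling number `π(G)`: least `k` such that every configuration of size `k` is
`r`-solvable for every root `r`. -/
noncomputable def pebblingNumber {V : Type*} (G : SimpleGraph V) [Fintype V] : ℕ :=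
  sInf {k | ∀ c : V → ℕ, (∑ v, c v) = k → ∀ r, Solvable G c r}

/-- The 2-pebbling number `π₂(G, s)`: least `m` such that for every root `r`, every
configuration of size at least `m` with support of size exactly `s` can place two pebbles
on `r`. -/
noncomputable def twoPebblingNumber {V : Type*} (G : SimpleGraph V) [Fintype V] (s : ℕ) : ℕ :=
  sInf {m | ∀ (r : V) (c : V → ℕ), m ≤ ∑ v, c v →
    (Finset.univ.filter fun v => 1 ≤ c v).card = s → NSolvable G c r 2}

/-- The Lemke graph `L` on vertices `v1, …, v8` (as `0, …, 7`). -/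
def lemkeL : SimpleGraph (Fin 8) :=
  SimpleGraph.fromRel fun a b =>
    (a, b) ∈ ([(0, 1), (0, 2), (1, 3), (2, 4), (2, 5), (2, 6), (3, 4), (3, 5), (3, 6),
      (3, 7), (4, 7), (5, 7), (6, 7)] : List (Fin 8 × Fin 8))

/-- The minimal Lemke graph `L₁`. -/
def lemkeL1 : SimpleGraph (Fin 8) :=
  SimpleGraph.fromRel fun a b =>
    (a, b) ∈ ([(0, 1), (0, 2), (1, 2), (1, 3), (2, 4), (2, 5), (2, 6), (3, 4), (3, 7),
      (4, 7), (5, 7), (6, 7)] : List (Fin 8 × Fin 8))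

/-- The minimal Lemke graph `L₂`. -/
def lemkeL2 : SimpleGraph (Fin 8) :=
  SimpleGraph.fromRel fun a b =>
    (a, b) ∈ ([(0, 1), (0, 2), (1, 3), (2, 4), (2, 5), (2, 6), (3, 4), (3, 6), (3, 7),
      (4, 5), (4, 7), (5, 6), (5, 7), (6, 7)] : List (Fin 8 × Fin 8))

/-!
The lower bound is the configuration with one pebble on every vertex except the root. For the upper
bound only the edges of `K_{4,4}` are needed, so the product consists of the copy of `G` containing
the root, three far copies on its side and four near copies adjacent to it. At each vertex of `G`
the far copies can send a reserve to any near copy, and the near copies can send half of their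
pebbles to the root copy, where one extra pebble is gained if the reserve makes an odd pile even.

For each of the Lemke graphs and each root, eight pebbles suffice for one pebble on the root, and
nine pairs, a single pebble left over at a vertex counting as a pair, suffice for two, with a single
exceptional configuration `E`. This is a finite computation. Two pebbles on the root vertex of a
near copy suffice to reach the root, as does one such pebble from each of two disjoint parts of the
configuration. Hence an unsolvable configuration has at most seven pebbles that can be brought to
the root copy, at most one far copy with nine pairs and, exceptions aside, at most eight pairs on
each near copy together with the reserve. Every pebble is counted in one of these, since four near
copies profit from a reserve and each by half of it. If all far copies have at most eight pairs and
there are no exceptions, this gives at most `7 + 4 * 8 + 3 * 8 = 63` pebbles. A far copy of nine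
pairs forces the near copies to be small, and an exception has a pile of nine pebbles, which leaves
enough slack in the count at its vertex or, if there is no reserve, restricts the other near copies.
-/

section Moves

variable {V : Type*} {G : SimpleGraph V}

lemma pebblingMove_iff [DecidableEq V] {c c' : V → ℕ} : PebblingMove G c c' ↔
    ∃ (v w : V) (d : V → ℕ), G.Adj v w ∧ c = d + Pi.single v 2 ∧ c' = d + Pi.single w 1 := by
  constructor
  · rintro ⟨v, w, hvw, hc, hv, hw, hu⟩
    refine ⟨v, w, c - Pi.single v 2, hvw, ?_, ?_⟩ <;> funext u
    · obtain rfl | huv := eq_or_ne u v <;> simp [*]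
    · obtain rfl | huv := eq_or_ne u v
      · simp [hvw.ne, hv]
      · obtain rfl | huw := eq_or_ne u w <;> simp [*]
  · rintro ⟨v, w, d, hvw, rfl, rfl⟩
    refine ⟨v, w, hvw, ?_, ?_, ?_, fun u huv huw ↦ ?_⟩ <;> simp [hvw.ne, hvw.ne', *]

lemma PebblingMove.add_right {c c' : V → ℕ} (h : PebblingMove G c c') (d : V → ℕ) :
    PebblingMove G (c + d) (c' + d) := by
  classical
  obtain ⟨v, w, e, hvw, rfl, rfl⟩ := pebblingMove_iff.1 h
  exact pebblingMove_iff.2 ⟨v, w, e + d, hvw, add_right_comm .., add_right_comm ..⟩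

end Moves

namespace Pebbling

/-! ### Reachability -/

/-- `Reaches G c d`: pebbling moves lead from `c` to a configuration dominating `d`. Discarding
pebbles freely makes the relation compatible with sums of configurations. -/
def Reaches {V : Type*} (G : SimpleGraph V) (c d : V → ℕ) : Prop :=
  ∃ c', Relation.ReflTransGen (PebblingMove G) c c' ∧ d ≤ c'

section Reachability

variable {V : Type*} {G : SimpleGraph V}

namespace Reaches

lemma of_le {c d : V → ℕ} (h : d ≤ c) : Reaches G c d := ⟨c, .refl, h⟩

lemma refl (c : V → ℕ) : Reaches G c c := of_le le_rfl

lemma add_right {c d : V → ℕ} (h : Reaches G c d) (e : V → ℕ) : Reaches G (c + e) (d + e) := by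
  obtain ⟨c', hc, hd⟩ := h
  exact ⟨c' + e, hc.lift (· + e) fun _ _ hm ↦ hm.add_right e, add_le_add_left hd e⟩

lemma trans {c d e : V → ℕ} (hcd : Reaches G c d) (hde : Reaches G d e) : Reaches G c e := by
  obtain ⟨c', hc, hd⟩ := hcd
  obtain ⟨f, hf, he⟩ := hde.add_right (c' - d)
  rw [add_tsub_cancel_of_le hd] at hf
  exact ⟨f, hc.trans hf, le_self_add.trans he⟩

lemma mono {c c' d d' : V → ℕ} (h : Reaches G c d) (hc : c ≤ c') (hd : d' ≤ d) :
    Reaches G c' d' :=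
  (of_le hc).trans (h.trans (of_le hd))

lemma add {c d c' d' : V → ℕ} (h : Reaches G c d) (h' : Reaches G c' d') :
    Reaches G (c + c') (d + d') := by
  refine (h.add_right c').trans ?_
  rw [add_comm d, add_comm d]
  exact h'.add_right d

lemma sum {ι : Type*} {s : Finset ι} {c d : ι → V → ℕ} (h : ∀ i ∈ s, Reaches G (c i) (d i)) :
    Reaches G (∑ i ∈ s, c i) (∑ i ∈ s, d i) := by
  classical
  induction s using Finset.induction_on with
  | empty => exact refl _
  | insert i s hi ih =>
    rw [sum_insert hi, sum_insert hi]
    exact (h i (mem_insert_self i s)).add (ih fun j hj ↦ h j (mem_insert_of_mem hj))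

lemma nsolvable [DecidableEq V] {c : V → ℕ} {r : V} {t : ℕ} (h : Reaches G c (Pi.single r t)) :
    NSolvable G c r t := by
  obtain ⟨c', hc, hr⟩ := h
  exact ⟨c', hc, by simpa using hr r⟩

lemma move [DecidableEq V] {v w : V} (h : G.Adj v w) (k : ℕ) :
    Reaches G (Pi.single v (2 * k)) (Pi.single w k) := by
  induction k with
  | zero => exact of_le (by simp)
  | succ k ih =>
    rw [mul_add, Pi.single_add, Pi.single_add]
    exact ih.add ⟨_, .single (pebblingMove_iff.2 ⟨v, w, 0, h, by simp, rfl⟩), by simp⟩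

lemma half [DecidableEq V] {v w : V} (h : G.Adj v w) (k : ℕ) :
    Reaches G (Pi.single v k) (Pi.single w (k / 2)) :=
  (move h (k / 2)).mono (Pi.single_mono v (Nat.mul_div_le k 2)) le_rfl

end Reaches

end Reachability

section Push

variable {V W : Type*} [Fintype V] [DecidableEq W]

/-- The push-forward of configurations along a map of vertices. -/
def push (f : V → W) : (V → ℕ) →+ (W → ℕ) :=
  ∑ v, (AddMonoidHom.single (fun _ ↦ ℕ) (f v)).comp (Pi.evalAddMonoidHom (fun _ ↦ ℕ) v)

lemma push_eq_sum (f : V → W) (c : V → ℕ) : push f c = ∑ v, Pi.single (f v) (c v) := by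
  simp [push]

lemma push_single [DecidableEq V] (f : V → W) (v : V) (k : ℕ) :
    push f (Pi.single v k) = Pi.single (f v) k := by
  rw [push_eq_sum, Fintype.sum_eq_single v fun u hu ↦ by simp [hu], Pi.single_eq_same]

lemma push_mono (f : V → W) : Monotone (push f) := fun c d h ↦ by
  simp only [push_eq_sum]
  exact sum_le_sum fun v _ ↦ Pi.single_mono (f v) (h v)

lemma push_equiv (e : V ≃ W) (c : V → ℕ) (w : W) : push e c w = c (e.symm w) := by
  classical
  rw [push_eq_sum, Finset.sum_apply, Fintype.sum_eq_single (e.symm w)]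
  · simp
  · rintro v hv
    exact Pi.single_eq_of_ne (fun h ↦ hv (by simp [h])) _

lemma Reaches.push {G : SimpleGraph V} {H : SimpleGraph W} {f : V → W}
    (hf : ∀ v w, G.Adj v w → H.Adj (f v) (f w)) {c d : V → ℕ} (h : Reaches G c d) :
    Reaches H (push f c) (push f d) := by
  classical
  obtain ⟨c', hc, hd⟩ := h
  refine .mono ?_ le_rfl (push_mono f hd)
  clear hd
  induction hc with
  | refl => exact refl _
  | tail _ hm ih =>
    obtain ⟨v, w, e, hvw, rfl, rfl⟩ := pebblingMove_iff.1 hm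
    refine ih.trans ?_
    simp only [map_add, push_single]
    exact (refl _).add (move (hf v w hvw) 1)

end Push

lemma Reaches.of_equiv {V W : Type*} [Finite V] [DecidableEq V] [DecidableEq W]
    {G : SimpleGraph V} {H : SimpleGraph W} (e : V ≃ W)
    (he : ∀ v w, G.Adj v w → H.Adj (e v) (e w)) {c : W → ℕ} {r : V} {t : ℕ}
    (h : Reaches G (c ∘ e) (Pi.single r t)) : Reaches H c (Pi.single (e r) t) := by
  have := Fintype.ofFinite V
  have hc : Pebbling.push e (c ∘ e) = c := funext fun w ↦ by simp [push_equiv]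
  simpa [hc, push_single] using h.push he

/-! ### Pairs of pebbles -/

/-- The number of pairs into which the pebbles of `c` can be grouped vertex by vertex, counting
a pebble left over at a vertex as a pair. -/
def pairs {V : Type*} [Fintype V] (c : V → ℕ) : ℕ := ∑ v, (c v + 1) / 2

/-- The solvability properties of `G` with root `r` from which the theorem follows: eight pebbles
suffice for one pebble on `r`, and nine pairs suffice for two, except for one configuration `E`
of nine pairs that has nine pebbles on `z` and at most one elsewhere. -/
structure PairPebbling {V : Type*} [Fintype V] [DecidableEq V] (G : SimpleGraph V) (r z : V)
    (E : V → ℕ) : Prop where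
  apply_self : E z = 9
  apply_le_one : ∀ v ≠ z, E v ≤ 1
  pairs_eq : pairs E = 9
  reach_one : ∀ c : V → ℕ, 8 ≤ ∑ v, c v → Reaches G c (Pi.single r 1)
  reach_two : ∀ c : V → ℕ, 9 ≤ pairs c → c ≠ E → Reaches G c (Pi.single r 2)

lemma PairPebbling.map {V W : Type*} [Fintype V] [Fintype W] [DecidableEq V] [DecidableEq W]
    {G : SimpleGraph V} {H : SimpleGraph W} {r z : V} {E : V → ℕ} (h : PairPebbling G r z E)
    (e : V ≃ W) (he : ∀ v w, G.Adj v w → H.Adj (e v) (e w)) :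
    PairPebbling H (e r) (e z) (E ∘ e.symm) where
  apply_self := by simpa using h.apply_self
  apply_le_one v hv := h.apply_le_one _ (mt e.symm_apply_eq.1 hv)
  pairs_eq := by simpa [pairs] using (e.symm.sum_comp fun v ↦ (E v + 1) / 2).trans h.pairs_eq
  reach_one c hc := .of_equiv e he (h.reach_one _ (hc.trans_eq (e.sum_comp c).symm))
  reach_two c hc hcE := .of_equiv e he <| h.reach_two _
    (hc.trans_eq (e.sum_comp fun w ↦ (c w + 1) / 2).symm) fun hE ↦ hcE <| by
      rw [← hE, Function.comp_assoc, Equiv.self_comp_symm, Function.comp_id]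

lemma exists_between_sum_eq {ι : Type*} [Fintype ι] {lo hi : ι → ℕ} (h : lo ≤ hi) {m : ℕ}
    (hlo : ∑ i, lo i ≤ m) (hhi : m ≤ ∑ i, hi i) : ∃ e, lo ≤ e ∧ e ≤ hi ∧ ∑ i, e i = m := by
  classical
  induction m, hlo using Nat.le_induction with
  | base => exact ⟨lo, le_rfl, h, rfl⟩
  | succ m _ ih =>
    obtain ⟨e, hle, heh, rfl⟩ := ih (by lia)
    obtain ⟨i, -, hi⟩ := exists_lt_of_sum_lt (Nat.lt_of_succ_le hhi)
    refine ⟨e + Pi.single i 1, hle.trans le_self_add, fun j ↦ ?_, by simp [sum_add_distrib]⟩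
    obtain rfl | hj := eq_or_ne j i
    · simpa using hi
    · simpa [hj] using heh j

/-! ### A verified search on small graphs -/

section Search

variable {n : ℕ}

/-- The configuration on `Fin n` listed by `l`; the kernel computes with lists. -/
def ofList (l : List ℕ) : Fin n → ℕ := fun i ↦ l.getD i 0

/-- Replace `k` pebbles on `v` by `m` pebbles on `w`. -/
def exchange (v w : Fin n) (k m : ℕ) (l : List ℕ) : List ℕ :=
  (l.modify v (· - k)).modify w (· + m)

/-- All configurations from which one move along one of the `arcs` leads to `t`. -/
def predecessors (arcs : List (Fin n × Fin n)) (t : List ℕ) : List (List ℕ) :=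
  (arcs.filter fun a ↦ 1 ≤ t.getD a.2 0).map fun a ↦ exchange a.2 a.1 1 2 t

/-- Pointwise comparison of configurations with at most eight entries below `8`, packed into
numbers in base `16` because the kernel has fast arithmetic on these; all eight digits of `mask`
are `8`. It only serves to prune a search. -/
def dominates (t s : List ℕ) : Bool :=
  let mask := 2290649224
  Nat.beq (Nat.land (Nat.ofDigits 16 t + mask - Nat.ofDigits 16 s) mask) mask

/-- Breadth-first search backwards along `arcs` for `d` rounds, starting from the configurations
in `front`, which drops configurations dominating one found earlier. -/
def backwardSearch (arcs : List (Fin n × Fin n)) :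
    (d : ℕ) → (found front : List (List ℕ)) → List (List ℕ)
  | 0, found, _ => found
  | d + 1, found, front =>
    let new := ((front.flatMap (predecessors arcs)).filter fun t ↦
      !found.any (dominates t)).pwFilter fun t s ↦ !dominates t s
    backwardSearch arcs d (new ++ found) new

/-- Depth-first search forwards for a configuration with `k` pebbles on `r`, which handles the
`arcs` in the given order and first tries to move as many pebbles along each of them as
possible. -/
def forwardSearch (r : Fin n) (k : ℕ) : (arcs : List (Fin n × Fin n)) → (c : List ℕ) → Bool
  | [], c => k ≤ c.getD r 0
  | (v, w) :: arcs, c => (List.range (c.getD v 0 / 2 + 1)).reverse.any fun j ↦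
      forwardSearch r k arcs (exchange v w (2 * j) j c)

/-- `forwardSearch` after adding any one pebble if `c = E`, and without adding one otherwise. -/
def forwardSearchExcept (r : Fin n) (k : ℕ) (arcs : List (Fin n × Fin n)) (E c : List ℕ) : Bool :=
  bif c == E then (List.finRange n).all fun v ↦ forwardSearch r k arcs (c.modify v (· + 1))
  else forwardSearch r k arcs c

/-- `List.foldr` by the bare recursor, which the kernel unfolds faster than a compiled recursion. -/
noncomputable def fold {α β : Type*} (f : α → β → β) (b : β) (l : List α) : β :=
  List.rec b (fun a _ ih ↦ f a ih) l

/-- Match the first entry of a template `(m, t)` with `c`, where `m` is the surplus of pebbles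
still to be found, and add what is left of the template to `ts`, unless the entry exceeds `c`. -/
def matchHead (c : ℕ) : (t : ℕ × List ℕ) → (ts : List (ℕ × List ℕ)) → List (ℕ × List ℕ)
  | (m, a :: t), ts => bif Nat.ble a c then (m - (c - a), t) :: ts else ts
  | (_, []), ts => ts

/-- Checks for all `e` of length `k` and sum `rem` that `e.map f` dominates one of the templates
`(m, t)` with a surplus of `m` pebbles, or that `exc` holds for `pre ++ e.map f`. -/
noncomputable def covers (f : ℕ → ℕ) (exc : List ℕ → Bool) :
    (k rem : ℕ) → (pre : List ℕ) → (ts : List (ℕ × List ℕ)) → Bool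
  | 0, rem, pre, ts => Nat.ble 1 rem || fold (fun t b ↦ Nat.beq t.1 0 || b) false ts || exc pre
  | k + 1, rem, pre, ts =>
    fold (fun t b ↦ fold (fun a b ↦ Nat.beq a 0 && b) true t.2 && Nat.ble t.1 rem || b) false ts ||
      (List.range (rem + 1)).all fun j ↦
        covers f exc k (rem - j) (pre ++ [f j]) (fold (matchHead (f j)) [] ts)

/-- The configurations found by `backwardSearch` from a single pebble on `r`. -/
def templates (arcs : List (Fin n × Fin n)) (r : Fin n) : List (List ℕ) :=
  let t := (List.replicate n 0).modify r fun _ ↦ 1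
  backwardSearch arcs 7 [t] [t]

/-- The computation behind `PairPebbling.of_check`. A configuration with at least nine pairs
dominates `e.map (2 * · - 1)` for some `e` with sum `9`; if the latter leaves eight pebbles outside
some template, then it can place two pebbles on `r`. The other configurations are treated by
forward search along `moves`. -/
noncomputable def check (arcs moves : List (Fin n × Fin n)) (r : Fin n) (E : List ℕ) : Bool :=
  covers id (fun _ ↦ false) n 8 [] ((templates arcs r).map fun t ↦ (0, t)) &&
  covers (2 * · - 1) (forwardSearchExcept r 2 moves E) n 9 []
    ((templates arcs r).map fun t ↦ (8, t))

variable {G : SimpleGraph (Fin n)}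

lemma length_exchange (v w : Fin n) (k m : ℕ) (l : List ℕ) :
    (exchange v w k m l).length = l.length := by
  simp [exchange]

lemma ofList_modify {l : List ℕ} (hl : l.length = n) (v : Fin n) (f : ℕ → ℕ) :
    (ofList (l.modify v f) : Fin n → ℕ) = Function.update (ofList l) v (f (ofList l v)) := by
  funext u
  have hu : (u : ℕ) < l.length := hl ▸ u.isLt
  obtain rfl | huv := eq_or_ne u v
  · simp [ofList, hu]
  · have : (v : ℕ) ≠ u := fun h ↦ huv (Fin.ext h.symm)
    simp [ofList, huv, this]

lemma exists_ofList_exchange {l : List ℕ} (hl : l.length = n) {v : Fin n} {k : ℕ}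
    (hk : k ≤ l.getD v 0) (w : Fin n) (m : ℕ) : ∃ d : Fin n → ℕ,
      ofList l = d + Pi.single v k ∧ ofList (exchange v w k m l) = d + Pi.single w m := by
  refine ⟨ofList l - Pi.single v k, ?_, ?_⟩
  · funext u
    obtain rfl | huv := eq_or_ne u v
    · simpa using (Nat.sub_add_cancel (show k ≤ ofList l u from hk)).symm
    · simp [huv]
  · rw [exchange, ofList_modify (by simpa using hl), ofList_modify hl]
    funext u
    obtain rfl | huw := eq_or_ne u w <;> obtain rfl | huv := eq_or_ne u v <;>
      simp [Function.update_apply, *]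

lemma mem_backwardSearch {arcs : List (Fin n × Fin n)} {P : List ℕ → Prop}
    (hP : ∀ t, P t → ∀ s ∈ predecessors arcs t, P s) {d : ℕ} {found front : List (List ℕ)}
    (hfound : ∀ t ∈ found, P t) (hfront : ∀ t ∈ front, P t) :
    ∀ t ∈ backwardSearch arcs d found front, P t := by
  induction d generalizing found front with
  | zero => exact hfound
  | succ _ ih =>
    have hnew : ∀ t ∈ ((front.flatMap (predecessors arcs)).filter fun t ↦
        !found.any (dominates t)).pwFilter (fun t s ↦ !dominates t s), P t := by
      intro t ht
      obtain ⟨s, hs, hts⟩ :=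
        List.mem_flatMap.1 (List.mem_of_mem_filter (List.pwFilter_subset _ ht))
      exact hP s (hfront s hs) t hts
    exact ih (fun t ht ↦ (List.mem_append.1 ht).elim (hnew t) (hfound t)) hnew

lemma reaches_of_mem_templates {arcs : List (Fin n × Fin n)} (harcs : ∀ a ∈ arcs, G.Adj a.1 a.2)
    {r : Fin n} {t : List ℕ} (ht : t ∈ templates arcs r) :
    t.length = n ∧ Reaches G (ofList t) (Pi.single r 1) := by
  have hroot : ∀ t ∈ [(List.replicate n 0).modify r fun _ ↦ 1],
      t.length = n ∧ Reaches G (ofList t) (Pi.single r 1) := by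
    simp only [List.mem_singleton, forall_eq, List.length_modify, List.length_replicate, true_and]
    rw [ofList_modify List.length_replicate]
    exact .of_le fun u ↦ by obtain rfl | hu := eq_or_ne u r <;> simp [*]
  refine mem_backwardSearch (fun t ⟨hl, ht⟩ s hs ↦ ?_) hroot hroot t ht
  simp only [predecessors, List.mem_map, List.mem_filter, decide_eq_true_eq] at hs
  obtain ⟨⟨v, w⟩, ⟨ha, hw⟩, rfl⟩ := hs
  obtain ⟨d, hd, hd'⟩ := exists_ofList_exchange hl hw v 2
  refine ⟨by simpa [length_exchange] using hl, .trans ?_ ht⟩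
  rw [hd, hd']
  exact (Reaches.refl d).add (.move (harcs _ ha) 1)

lemma reaches_of_forwardSearch {r : Fin n} {k : ℕ} {arcs : List (Fin n × Fin n)}
    (harcs : ∀ a ∈ arcs, G.Adj a.1 a.2) {c : List ℕ} (hc : c.length = n)
    (h : forwardSearch r k arcs c) : Reaches G (ofList c) (Pi.single r k) := by
  induction arcs generalizing c with
  | nil =>
    refine .of_le fun u ↦ ?_
    obtain rfl | hu := eq_or_ne u r
    · simpa [forwardSearch, ofList] using h
    · simp [hu]
  | cons a arcs ih =>
    obtain ⟨v, w⟩ := a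
    simp only [forwardSearch, List.any_eq_true, List.mem_reverse, List.mem_range] at h
    obtain ⟨j, hj, h⟩ := h
    rw [List.forall_mem_cons] at harcs
    obtain ⟨d, hd, hd'⟩ := exists_ofList_exchange hc (v := v) (k := 2 * j) (by lia) w j
    refine .trans ?_ (ih harcs.2 (by simpa [length_exchange] using hc) h)
    rw [hd, hd']
    exact (Reaches.refl d).add (.move harcs.1 j)

lemma fold_or {α : Type*} (p : α → Bool) (l : List α) :
    fold (fun a b ↦ p a || b) false l = l.any p := by
  induction l with
  | nil => rfl
  | cons a l ih => rw [List.any_cons, ← ih]; rfl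

lemma fold_and {α : Type*} (p : α → Bool) (l : List α) :
    fold (fun a b ↦ p a && b) true l = l.all p := by
  induction l with
  | nil => rfl
  | cons a l ih => rw [List.all_cons, ← ih]; rfl

lemma exists_of_mem_fold_matchHead {c : ℕ} {t : ℕ × List ℕ} {ts : List (ℕ × List ℕ)}
    (h : t ∈ fold (matchHead c) [] ts) :
    ∃ m a, (m, a :: t.2) ∈ ts ∧ a ≤ c ∧ t.1 = m - (c - a) := by
  induction ts with
  | nil => cases h
  | cons s ts ih =>
    change t ∈ matchHead c s (fold (matchHead c) [] ts) at h
    obtain ⟨m, _ | ⟨a, s⟩⟩ := s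
    · obtain ⟨m', a', h', hh⟩ := ih h
      exact ⟨m', a', List.mem_cons_of_mem _ h', hh⟩
    · rw [matchHead, Bool.cond_eq_ite] at h
      split_ifs at h with hac
      · obtain rfl | h := List.mem_cons.1 h
        · exact ⟨m, a, List.mem_cons_self, Nat.le_of_ble_eq_true hac, rfl⟩
        · obtain ⟨m', a', h', hh⟩ := ih h
          exact ⟨m', a', List.mem_cons_of_mem _ h', hh⟩
      · obtain ⟨m', a', h', hh⟩ := ih h
        exact ⟨m', a', List.mem_cons_of_mem _ h', hh⟩

lemma of_covers {f : ℕ → ℕ} (hf : ∀ j, j ≤ f j) {exc : List ℕ → Bool} {e pre : List ℕ}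
    {ts : List (ℕ × List ℕ)} (hts : ∀ t ∈ ts, t.2.length = e.length)
    (h : covers f exc e.length e.sum pre ts) :
    (∃ t ∈ ts, List.Forall₂ (· ≤ ·) t.2 (e.map f) ∧ t.1 + t.2.sum ≤ (e.map f).sum) ∨
      exc (pre ++ e.map f) := by
  induction e generalizing pre ts with
  | nil =>
    simp only [List.length_nil, List.length_eq_zero_iff] at hts
    simp only [List.length_nil, List.sum_nil, covers, fold_or, Bool.or_eq_true, List.any_eq_true,
      Nat.beq_eq] at h
    obtain (h | ⟨t, ht, h⟩) | h := h
    · cases h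
    · exact .inl ⟨t, ht, by simp [hts t ht, h]⟩
    · exact .inr (by simpa using h)
  | cons j e ih =>
    simp only [List.length_cons, List.sum_cons, covers, fold_or, fold_and, Bool.or_eq_true,
      List.any_eq_true, Bool.and_eq_true, List.all_eq_true, Nat.beq_eq, Nat.ble_eq,
      List.mem_range] at h
    obtain ⟨t, ht, hzero, hm⟩ | h := h
    · refine .inl ⟨t, ht, ?_, ?_⟩
      · rw [List.forall₂_iff_get]
        refine ⟨by simpa using hts t ht, fun i hi _ ↦ ?_⟩
        simp [hzero _ (List.getElem_mem hi)]
      · have hle : (j :: e).sum ≤ ((j :: e).map f).sum :=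
          List.Forall₂.sum_le_sum <|
            List.forall₂_map_right_iff.2 (List.forall₂_same.2 fun i _ ↦ hf i)
        have := List.sum_eq_zero hzero
        rw [List.sum_cons] at hle
        lia
    · have hts' : ∀ t ∈ fold (matchHead (f j)) [] ts, t.2.length = e.length := fun t ht ↦ by
        obtain ⟨m, a, hmem, -, -⟩ := exists_of_mem_fold_matchHead ht
        simpa using hts _ hmem
      have hcov := h j (by lia)
      rw [Nat.add_sub_cancel_left] at hcov
      obtain ⟨t, ht, hle, hsum⟩ | hexc := ih hts' hcov
      · obtain ⟨m, a, hmem, hac, hm⟩ := exists_of_mem_fold_matchHead ht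
        refine .inl ⟨_, hmem, .cons hac hle, ?_⟩
        simp only [List.sum_cons, List.map_cons]
        lia
      · exact .inr (by simpa using hexc)

lemma ofList_ofFn (c : Fin n → ℕ) : ofList (List.ofFn c) = c := by
  funext v
  simp [ofList]

lemma ofList_le_of_forall₂ {l l' : List ℕ} (h : List.Forall₂ (· ≤ ·) l l') :
    (ofList l : Fin n → ℕ) ≤ ofList l' := by
  have getD_le (i : ℕ) : l.getD i 0 ≤ l'.getD i 0 := by
    induction h generalizing i with
    | nil => exact le_rfl
    | cons hab _ ih =>
      cases i with
      | zero => exact hab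
      | succ i => exact ih i
  exact fun v ↦ getD_le v

lemma sum_ofList {l : List ℕ} (hl : l.length = n) : ∑ v, (ofList l : Fin n → ℕ) v = l.sum := by
  subst hl
  simp [ofList, ← List.sum_ofFn]

lemma exists_reaches_or_of_covers {arcs : List (Fin n × Fin n)}
    (harcs : ∀ a ∈ arcs, G.Adj a.1 a.2) {r : Fin n} {m s : ℕ} {f : ℕ → ℕ} (hf : ∀ j, j ≤ f j)
    {exc : List ℕ → Bool} (h : covers f exc n s [] ((templates arcs r).map fun t ↦ (m, t)))
    {e : Fin n → ℕ} (he : ∑ v, e v = s) :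
    (∃ d ≤ f ∘ e, m + ∑ v, d v ≤ ∑ v, f (e v) ∧ Reaches G d (Pi.single r 1)) ∨
      exc (List.ofFn (f ∘ e)) := by
  have hts : ∀ t ∈ (templates arcs r).map fun t ↦ (m, t), t.2.length = (List.ofFn e).length := by
    simpa using fun t ht ↦ (reaches_of_mem_templates harcs ht).1
  obtain ⟨_, hmem, hle, hsum⟩ | h := of_covers hf hts (by simpa [List.sum_ofFn, he] using h)
  · obtain ⟨t, ht, rfl⟩ := List.mem_map.1 hmem
    obtain ⟨hl, ht⟩ := reaches_of_mem_templates harcs ht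
    rw [List.map_ofFn] at hle hsum
    refine .inl ⟨ofList t, ?_, ?_, ht⟩
    · simpa only [ofList_ofFn] using ofList_le_of_forall₂ (n := n) hle
    · simpa [sum_ofList hl, List.sum_ofFn] using hsum
  · exact .inr (by simpa using h)

lemma reaches_of_forwardSearchExcept {moves : List (Fin n × Fin n)}
    (hmoves : ∀ a ∈ moves, G.Adj a.1 a.2) {r : Fin n} {k : ℕ} {E : List ℕ} {c d : Fin n → ℕ}
    (hdc : d ≤ c) (hcE : c ≠ ofList E) (h : forwardSearchExcept r k moves E (List.ofFn d)) :
    Reaches G c (Pi.single r k) := by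
  rw [forwardSearchExcept, Bool.cond_eq_ite] at h
  split_ifs at h with hE
  · obtain rfl := eq_of_beq hE
    rw [ofList_ofFn] at hcE
    obtain ⟨v, hv⟩ := (Pi.lt_def.1 (lt_of_le_of_ne hdc hcE.symm)).2
    have hreach := reaches_of_forwardSearch hmoves (by simp)
      (List.all_eq_true.1 h v (List.mem_finRange v))
    refine hreach.mono (fun u ↦ ?_) le_rfl
    rw [ofList_modify List.length_ofFn, ofList_ofFn]
    obtain rfl | hu := eq_or_ne u v
    · simpa using hv
    · simpa [hu] using hdc u
  · have hreach := reaches_of_forwardSearch hmoves (by simp) h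
    exact hreach.mono (by rwa [ofList_ofFn]) le_rfl

lemma PairPebbling.of_check {arcs moves : List (Fin n × Fin n)}
    (harcs : ∀ a ∈ arcs, G.Adj a.1 a.2) (hmoves : ∀ a ∈ moves, G.Adj a.1 a.2) {r z : Fin n}
    {E : List ℕ} (hz : (ofList E : Fin n → ℕ) z = 9)
    (hE : ∀ v ≠ z, (ofList E : Fin n → ℕ) v ≤ 1) (hpairs : pairs (ofList E : Fin n → ℕ) = 9)
    (h : check arcs moves r E) : PairPebbling G r z (ofList E) := by
  rw [check, Bool.and_eq_true] at h
  have reach_one (c : Fin n → ℕ) (hc : 8 ≤ ∑ v, c v) : Reaches G c (Pi.single r 1) := by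
    obtain ⟨e, -, hec, he⟩ := exists_between_sum_eq (lo := 0) (hi := c) (by simp) (by simp) hc
    obtain ⟨d, hde, -, hd⟩ | h := exists_reaches_or_of_covers harcs (fun _ ↦ le_rfl) h.1 he
    · exact hd.mono (hde.trans hec) le_rfl
    · cases h
  refine ⟨hz, hE, hpairs, reach_one, fun c hc hcE ↦ ?_⟩
  obtain ⟨e, -, hec, he⟩ := exists_between_sum_eq (lo := 0) (by simp) (by simp) hc
  have hle : (2 * · - 1) ∘ e ≤ c := fun v ↦ by
    have : e v ≤ (c v + 1) / 2 := hec v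
    simp only [Function.comp_apply]
    lia
  obtain ⟨d, hde, hsum, hd⟩ | h := exists_reaches_or_of_covers harcs (fun j ↦ by lia) h.2 he
  · have hdc : d + (c - d) = c := add_tsub_cancel_of_le (hde.trans hle)
    have hleft : 8 ≤ ∑ v, (c - d) v := by
      have hadd : ∑ v, d v + ∑ v, (c - d) v = ∑ v, c v := by
        rw [← sum_add_distrib]
        exact congrArg (fun c : Fin n → ℕ ↦ ∑ v, c v) hdc
      have : ∑ v, (2 * e v - 1) ≤ ∑ v, c v := sum_le_sum fun v _ ↦ hle v
      lia
    rw [← hdc, ← one_add_one_eq_two, Pi.single_add]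
    exact hd.add (reach_one _ hleft)
  · exact reaches_of_forwardSearchExcept hmoves hle hcE h

end Search

section Lemke

/-- The configuration to be excluded in `PairPebbling`, up to the symmetry of `lemkeL2`. -/
def lemkeException : List ℕ := [0, 0, 0, 1, 1, 1, 1, 9]

/-- The `check` for a graph on `Fin 8` with the given edges. The forward search moves along the
edges as listed, except that it goes from the vertex `7` downwards for the root `0`. -/
noncomputable def checkEdges (edges : List (Fin 8 × Fin 8)) (r : Fin 8) : Bool :=
  check (edges ++ edges.map Prod.swap)
    (bif r == 0 then (edges.map Prod.swap).insertionSort fun a b ↦ b.1 ≤ a.1 else edges)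
    r lemkeException

lemma PairPebbling.of_checkEdges {G : SimpleGraph (Fin 8)} {edges : List (Fin 8 × Fin 8)}
    (hadj : ∀ a ∈ edges, G.Adj a.1 a.2) {r : Fin 8} (h : checkEdges edges r) :
    PairPebbling G r 7 (ofList lemkeException) := by
  have hswap : ∀ a ∈ edges.map Prod.swap, G.Adj a.1 a.2 := by
    simp only [List.mem_map]
    rintro _ ⟨a, ha, rfl⟩
    exact (hadj a ha).symm
  refine .of_check (fun a ha ↦ (List.mem_append.1 ha).elim (hadj a) (hswap a)) ?_
    (by decide) (by decide) (by decide) h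
  intro a ha
  rw [Bool.cond_eq_ite] at ha
  split_ifs at ha
  · exact hswap a ((List.mem_insertionSort _).1 ha)
  · exact hadj a ha

lemma pairPebbling_lemkeL (r : Fin 8) :
    PairPebbling lemkeL r 7 (ofList lemkeException) := by
  let edges : List (Fin 8 × Fin 8) := [(0, 1), (0, 2), (1, 3), (2, 4), (2, 5), (2, 6), (3, 4),
    (3, 5), (3, 6), (3, 7), (4, 7), (5, 7), (6, 7)]
  have hcheck : ∀ r, checkEdges edges r := by decide +kernel
  exact .of_checkEdges (by simp [edges, lemkeL, SimpleGraph.fromRel_adj]) (hcheck r)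

lemma pairPebbling_lemkeL1 (r : Fin 8) :
    PairPebbling lemkeL1 r 7 (ofList lemkeException) := by
  let edges : List (Fin 8 × Fin 8) := [(0, 1), (0, 2), (1, 2), (1, 3), (2, 4), (2, 5), (2, 6),
    (3, 4), (3, 7), (4, 7), (5, 7), (6, 7)]
  have hcheck : ∀ r, checkEdges edges r := by decide +kernel
  exact .of_checkEdges (by simp [edges, lemkeL1, SimpleGraph.fromRel_adj]) (hcheck r)

lemma exists_pairPebbling_lemkeL2 (r : Fin 8) : ∃ z E, PairPebbling lemkeL2 r z E := by
  let edges : List (Fin 8 × Fin 8) := [(0, 1), (0, 2), (1, 3), (2, 4), (2, 5), (2, 6), (3, 4),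
    (3, 6), (3, 7), (4, 5), (4, 7), (5, 6), (5, 7), (6, 7)]
  have hadj : ∀ a ∈ edges, lemkeL2.Adj a.1 a.2 := by
    simp [edges, lemkeL2, SimpleGraph.fromRel_adj]
  have hcheck : ∀ r ∈ [0, 2, 4, 6, 7], checkEdges edges r := by decide +kernel
  let σ : Equiv.Perm (Fin 8) := .swap 0 1 * .swap 2 3 * .swap 5 7
  have hσ (v w : Fin 8) : lemkeL2.Adj v w → lemkeL2.Adj (σ v) (σ w) := by
    simp only [lemkeL2, SimpleGraph.fromRel_adj]
    decide +revert
  have horbit : ∀ r, r ∈ [0, 2, 4, 6, 7] ∨ σ r ∈ [0, 2, 4, 6, 7] := by decide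
  have hinv : ∀ r, σ (σ r) = r := by decide
  obtain hr | hr := horbit r
  · exact ⟨_, _, .of_checkEdges hadj (hcheck r hr)⟩
  · have h := (PairPebbling.of_checkEdges hadj (hcheck _ hr)).map σ hσ
    rw [hinv r] at h
    exact ⟨_, _, h⟩

end Lemke

/-! ### Products with a complete bipartite graph -/

section Layers

variable {V K : Type*} [Fintype V] [DecidableEq V] [DecidableEq K] {G : SimpleGraph V}
  {H : SimpleGraph K}

/-- The configuration on a product that is `f` on the copy of the first factor at `h`. -/
def layer (h : K) : (V → ℕ) →+ (V × K → ℕ) := push fun g ↦ (g, h)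

lemma layer_apply (h : K) (f : V → ℕ) (g : V) (h' : K) :
    layer h f (g, h') = if h' = h then f g else 0 := by
  rw [layer, push_eq_sum, Finset.sum_apply, Fintype.sum_eq_single g]
  · simp [Pi.single_apply]
  · exact fun g' hg ↦ Pi.single_eq_of_ne (by simp [hg.symm]) _

lemma layer_single (h : K) (g : V) (k : ℕ) :
    layer h (Pi.single g k) = Pi.single (g, h) k :=
  push_single ..

/-- The most pebbles a configuration can send to an adjacent copy without changing the vertex. -/
def half (f : V → ℕ) : V → ℕ := fun g ↦ f g / 2

lemma layer_le_iff {h : K} {f : V → ℕ} {c : V × K → ℕ} :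
    layer h f ≤ c ↔ ∀ g, f g ≤ c (g, h) := by
  refine ⟨fun hle g ↦ by simpa [layer_apply] using hle (g, h), fun hle ⟨g, h'⟩ ↦ ?_⟩
  rw [layer_apply]
  split_ifs with hh
  · exact hh ▸ hle g
  · exact zero_le

lemma Reaches.to_layer (h : K) {f d : V → ℕ} (hfd : Reaches G f d) :
    Reaches (G □ H) (layer h f) (layer h d) :=
  hfd.push fun _ _ hvw ↦ boxProd_adj_left.2 hvw

lemma reaches_layer_half {h h' : K} (hh : H.Adj h h') (f : V → ℕ) :
    Reaches (G □ H) (layer h f) (layer h' (half f)) := by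
  simp only [layer, push_eq_sum]
  exact .sum fun _ _ ↦ .half (boxProd_adj_right.2 hh) _

lemma Reaches.single_of_layer {h h' : K} (hh : H.Adj h h') {r : V} {f : V → ℕ} {t : ℕ}
    (hf : Reaches G f (Pi.single r t)) :
    Reaches (G □ H) (layer h f) (Pi.single (r, h') (t / 2)) := by
  refine (hf.to_layer h).trans ?_
  rw [layer_single]
  exact .half (boxProd_adj_right.2 hh) t

end Layers

section Bipartite

variable {V I J : Type*} [Fintype V] [DecidableEq V] [Fintype I] [DecidableEq I] [Fintype J]
  [DecidableEq J] {G : SimpleGraph V} {r : V} {x : V → ℕ} {A : I → V → ℕ} {B : J → V → ℕ}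
  {i i' : I} {j j' : J}

/-- The configuration on the product with a complete bipartite graph on `Option I` and `J` that is
`x` on the copy of the root, `none`, is `A i` on the other copies on its side, and is `B j` on the
copies adjacent to it. -/
def assemble (x : V → ℕ) (A : I → V → ℕ) (B : J → V → ℕ) : V × (Option I ⊕ J) → ℕ :=
  layer (.inl none) x + ∑ j, layer (.inr j) (B j) + ∑ i, layer (.inl (some i)) (A i)

/-- The pebbles that the far copies can send to any one of the near copies. -/
def reserve (A : I → V → ℕ) : V → ℕ := ∑ i, half (A i)

@[simp]
lemma assemble_root (x : V → ℕ) (A : I → V → ℕ) (B : J → V → ℕ) (g : V) :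
    assemble x A B (g, .inl none) = x g := by
  simp [assemble, layer_apply]

@[simp]
lemma assemble_far (x : V → ℕ) (A : I → V → ℕ) (B : J → V → ℕ) (g : V) (i : I) :
    assemble x A B (g, .inl (some i)) = A i g := by
  simp [assemble, layer_apply]

@[simp]
lemma assemble_near (x : V → ℕ) (A : I → V → ℕ) (B : J → V → ℕ) (g : V) (j : J) :
    assemble x A B (g, .inr j) = B j g := by
  simp [assemble, layer_apply]

lemma assemble_apply_self (c : V × (Option I ⊕ J) → ℕ) :
    assemble (fun g ↦ c (g, .inl none)) (fun i g ↦ c (g, .inl (some i)))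
      (fun j g ↦ c (g, .inr j)) = c := by
  funext ⟨g, k⟩
  obtain (_ | i) | j := k <;> simp

lemma sum_assemble (x : V → ℕ) (A : I → V → ℕ) (B : J → V → ℕ) :
    ∑ v, assemble x A B v = ∑ g, (x g + ∑ j, B j g + ∑ i, A i g) := by
  simp [Fintype.sum_prod_type, sum_add_distrib, add_right_comm]

lemma reaches_route_reserve (A : I → V → ℕ) (φ : V → J) :
    Reaches (G □ completeBipartiteGraph (Option I) J) (∑ i, layer (.inl (some i)) (A i))
      (∑ j, layer (.inr j) (fun g ↦ if φ g = j then reserve A g else 0)) := by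
  have hA (i : I) : A i = ∑ j, fun g ↦ if φ g = j then A i g else 0 := by
    funext g
    simp
  have hhalf (j : J) : (fun g ↦ if φ g = j then reserve A g else 0) =
      ∑ i, half (fun g ↦ if φ g = j then A i g else 0) := by
    funext g
    by_cases hg : φ g = j <;> simp [reserve, half, hg]
  have hsplit (i : I) : layer (.inl (some i) : Option I ⊕ J) (A i) =
      ∑ j, layer (.inl (some i)) (fun g ↦ if φ g = j then A i g else 0) := by
    rw [← map_sum, ← hA]
  simp only [hsplit, hhalf, map_sum]
  rw [sum_comm]
  exact .sum fun j _ ↦ .sum fun i _ ↦ reaches_layer_half (by simp) _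

lemma reaches_assemble_route (x : V → ℕ) (A : I → V → ℕ) (B : J → V → ℕ) (φ : V → J) :
    Reaches (G □ completeBipartiteGraph (Option I) J) (assemble x A B)
      (assemble x 0 fun j g ↦ B j g + if φ g = j then reserve A g else 0) := by
  have h := (Reaches.refl (layer (.inl none) x + ∑ j, layer (.inr j) (B j))).add
    (reaches_route_reserve (G := G) A φ)
  refine h.mono le_rfl (le_of_eq ?_)
  simp only [assemble, add_assoc, Pi.zero_apply, map_zero, sum_const_zero, add_zero]
  simp only [← sum_add_distrib, ← map_add]
  rfl

lemma reaches_root_layer (x : V → ℕ) (A : I → V → ℕ) (B : J → V → ℕ) :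
    Reaches (G □ completeBipartiteGraph (Option I) J) (assemble x A B)
      (layer (.inl none) (x + ∑ j, half (B j))) := by
  rw [map_add, map_sum]
  exact ((Reaches.refl _).add (.sum fun j _ ↦ reaches_layer_half (by simp) _)).mono le_self_add
    le_rfl

/-- The pebble that the root copy gains at a vertex when a reserve of `m` pebbles there is spent on
a near copy with an odd number of pebbles; `b j` is the number of pebbles on the near copy `j`. -/
def boost (m : ℕ) (b : J → ℕ) : ℕ :=
  open Classical in if 1 ≤ m ∧ ∃ j, Odd (b j) then 1 else 0

lemma reaches_root_layer_boost [Nonempty J] (x : V → ℕ) (A : I → V → ℕ) (B : J → V → ℕ) :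
    Reaches (G □ completeBipartiteGraph (Option I) J) (assemble x A B)
      (layer (.inl none) fun g ↦ x g + ∑ j, B j g / 2 + boost (reserve A g) (B · g)) := by
  have hφ (g : V) : ∃ j, (∃ j, Odd (B j g)) → Odd (B j g) := by
    by_cases h : ∃ j, Odd (B j g)
    · exact h.imp fun _ hj _ ↦ hj
    · exact ⟨Classical.arbitrary J, fun h' ↦ absurd h' h⟩
  choose φ hφ using hφ
  refine ((reaches_assemble_route x A B φ).trans (reaches_root_layer ..)).mono le_rfl
    (push_mono _ fun g ↦ ?_)
  simp only [Pi.add_apply, Finset.sum_apply, half, add_assoc, add_le_add_iff_left]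
  have hterm (j : J) : B j g / 2 + (if φ g = j then boost (reserve A g) (B · g) else 0) ≤
      (B j g + if φ g = j then reserve A g else 0) / 2 := by
    split_ifs with hj
    · rw [boost]
      split_ifs with hg
      · obtain ⟨k, hk⟩ := hj ▸ hφ g hg.2
        lia
      · lia
    · simp
  calc _ = ∑ j, (B j g / 2 + if φ g = j then boost (reserve A g) (B · g) else 0) := by
        simp [sum_add_distrib]
    _ ≤ _ := sum_le_sum fun j _ ↦ hterm j

lemma assemble_add_layer_near (x : V → ℕ) (A : I → V → ℕ) (B : J → V → ℕ) (j : J) :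
    assemble x A (Function.update B j 0) + layer (.inr j) (B j) = assemble x A B := by
  funext ⟨g, k⟩
  obtain (_ | i) | j' := k
  · simp [layer_apply]
  · simp [layer_apply]
  · obtain rfl | hj := eq_or_ne j' j <;> simp [layer_apply, *]

lemma assemble_add_layer_far (x : V → ℕ) (B : J → V → ℕ) {f d : V → ℕ} (hA : A i = f + d) :
    assemble x (Function.update A i d) B + layer (.inl (some i)) f = assemble x A B := by
  funext ⟨g, k⟩
  obtain (_ | i') | j := k
  · simp [layer_apply]
  · obtain rfl | hi := eq_or_ne i' i <;> simp [layer_apply, add_comm, *]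
  · simp [layer_apply]

lemma reaches_near (x : V → ℕ) (A : I → V → ℕ) (B : J → V → ℕ) (j : J) :
    Reaches (G □ completeBipartiteGraph (Option I) J) (assemble x A B)
      (layer (.inr j) (B j + reserve A)) := by
  refine (reaches_assemble_route x A B fun _ ↦ j).mono le_rfl ?_
  exact layer_le_iff.2 fun g ↦ by simp

lemma reaches_root_of_near (h : Reaches G (B j + reserve A) (Pi.single r 2)) :
    Reaches (G □ completeBipartiteGraph (Option I) J) (assemble x A B)
      (Pi.single (r, .inl none) 1) :=
  (reaches_near x A B j).trans (h.single_of_layer (by simp))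

omit [Fintype V] [Fintype I] [Fintype J] in
lemma reaches_root_of_add {c c' : V × (Option I ⊕ J) → ℕ} {j : J}
    (h : Reaches (G □ completeBipartiteGraph (Option I) J) c (Pi.single (r, .inr j) 1))
    (h' : Reaches (G □ completeBipartiteGraph (Option I) J) c' (Pi.single (r, .inr j) 1)) :
    Reaches (G □ completeBipartiteGraph (Option I) J) (c + c') (Pi.single (r, .inl none) 1) := by
  refine (h.add h').trans ?_
  rw [← Pi.single_add]
  exact .move (boxProd_adj_right.2 (by simp)) 1

lemma reaches_root_of_far_near {f d : V → ℕ} (hA : A i = f + d)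
    (hf : Reaches G f (Pi.single r 2))
    (hB : Reaches G (B j + reserve (Function.update A i d)) (Pi.single r 1)) :
    Reaches (G □ completeBipartiteGraph (Option I) J) (assemble x A B)
      (Pi.single (r, .inl none) 1) := by
  rw [← assemble_add_layer_far x B hA]
  refine reaches_root_of_add (j := j) ((reaches_near x _ B j).trans ?_)
    (hf.single_of_layer (by simp))
  rw [← layer_single]
  exact hB.to_layer _

lemma reaches_root_of_far_far [Nonempty J] (hi : i ≠ i') (h : Reaches G (A i) (Pi.single r 2))
    (h' : Reaches G (A i') (Pi.single r 2)) :
    Reaches (G □ completeBipartiteGraph (Option I) J) (assemble x A B)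
      (Pi.single (r, .inl none) 1) := by
  obtain ⟨j⟩ := ‹Nonempty J›
  rw [← assemble_add_layer_far x B (add_zero (A i)).symm]
  refine reaches_root_of_add (j := j) ?_ (h.single_of_layer (by simp))
  refine .mono (h'.single_of_layer (h := .inl (some i')) (by simp)) ?_ le_rfl
  exact layer_le_iff.2 fun g ↦ by simp [hi.symm]

lemma reaches_root_of_near_near (hj : j ≠ j')
    (h : Reaches G (A i + half (B j)) (Pi.single r 2)) (h' : Reaches G (B j') (Pi.single r 1)) :
    Reaches (G □ completeBipartiteGraph (Option I) J) (assemble x A B)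
      (Pi.single (r, .inl none) 1) := by
  rw [← assemble_add_layer_near x A B j, ← assemble_add_layer_far x _ (add_zero (A i)).symm,
    add_assoc]
  refine reaches_root_of_add (j := j') ?_ ?_
  · rw [← layer_single]
    refine (h'.to_layer _).mono ?_ le_rfl
    exact layer_le_iff.2 fun g ↦ by simp [hj.symm]
  · refine ((Reaches.refl _).add
      (reaches_layer_half (h' := .inl (some i)) (by simp) (B j))).trans ?_
    rw [← map_add]
    exact h.single_of_layer (by simp)

end Bipartite

/-! ### Arithmetic at a single vertex -/

section Column

variable {J : Type*} [Fintype J] {b : J → ℕ} {m k l : ℕ}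

lemma boost_of_odd {j : J} (hm : 1 ≤ m) (hj : Odd (b j)) : boost m b = 1 :=
  if_pos ⟨hm, j, hj⟩

lemma sum_succ_div_two_add_even (b : J → ℕ) (q : ℕ) :
    ∑ j, (b j + 2 * q + 1) / 2 = ∑ j, (b j + 1) / 2 + Fintype.card J * q := by
  have h (j : J) : (b j + 2 * q + 1) / 2 = (b j + 1) / 2 + q := by lia
  simp [h, sum_add_distrib]

lemma sum_succ_div_two_add_odd (b : J → ℕ) (q : ℕ) :
    ∑ j, (b j + (2 * q + 1) + 1) / 2 =
      ∑ j, (b j + 1) / 2 + Fintype.card J * q + #{j | Even (b j)} := by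
  have h (j : J) : (b j + (2 * q + 1) + 1) / 2 =
      (b j + 1) / 2 + q + if Even (b j) then 1 else 0 := by
    split_ifs <;> grind
  simp [h, sum_add_distrib]

lemma sum_eq_sum_half_add (b : J → ℕ) : ∑ j, b j = ∑ j, b j / 2 + ∑ j, (b j + 1) / 2 := by
  rw [← sum_add_distrib]
  exact sum_congr rfl fun j _ ↦ by lia

lemma card_mul_le_sum_half (b : J → ℕ) (m : ℕ) :
    #{j | b j + m = 9} * ((9 - m) / 2) ≤ ∑ j, b j / 2 := by
  refine (card_nsmul_le_sum _ (fun j ↦ b j / 2) _ fun j hj ↦ ?_).trans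
    (sum_le_sum_of_subset (subset_univ _))
  have := (mem_filter.1 hj).2
  lia

lemma card_le_card_even (hm : Odd m) : #{j | b j + m = 9} ≤ #{j | Even (b j)} :=
  card_le_card <| monotone_filter_right _ fun j _ hj ↦ by
    change b j + m = 9 at hj
    grind

lemma boost_eq_one_of_card_ne_zero (hm : Even m) (hm0 : m ≠ 0) (h : #{j | b j + m = 9} ≠ 0) :
    boost m b = 1 := by
  obtain ⟨j, hj⟩ := card_ne_zero.1 h
  have := (mem_filter.1 hj).2
  exact boost_of_odd (j := j) (by lia) (by grind)

lemma boost_eq_one_or_card_even (b : J → ℕ) (hm : m ≠ 0) :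
    boost m b = 1 ∨ #{j | Even (b j)} = Fintype.card J := by
  refine or_iff_not_imp_left.2 fun h ↦ ?_
  rw [← Finset.card_univ, filter_true_of_mem]
  exact fun j _ ↦ Nat.not_odd_iff_even.1 fun hj ↦ h (boost_of_odd (by lia) hj)

variable (hJ : Fintype.card J = 4)
include hJ

lemma column_le (hk : k ≤ #{j | b j + m = 9}) (hkm : k = 0 ∨ 1 ≤ m) (hl : 4 * l ≤ m)
    (hb : ∑ j, b j / 2 ≤ 7) :
    ∑ j, (b j + 1) / 2 + m + (k + l) ≤ boost m b + ∑ j, (b j + m + 1) / 2 := by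
  have hD := card_mul_le_sum_half b m
  have hK : #{j | b j + m = 9} ≤ 4 := hJ ▸ card_le_univ _
  obtain ⟨q, rfl | rfl⟩ := Nat.even_or_odd' m
  · have hγ := boost_eq_one_of_card_ne_zero (b := b) (even_two_mul q)
    rw [sum_succ_div_two_add_even, hJ]
    obtain rfl | rfl | hq : q = 0 ∨ q = 1 ∨ 2 ≤ q := by lia
    all_goals lia
  · have hγ := boost_eq_one_or_card_even b (Nat.succ_ne_zero (2 * q))
    have hν := card_le_card_even (b := b) (odd_two_mul_add_one q)
    rw [sum_succ_div_two_add_odd, hJ]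
    obtain rfl | hq := q.eq_zero_or_pos
    all_goals lia

lemma column_add_one_le {j : J} (hj : Even (b j)) :
    ∑ j, (b j + 1) / 2 + 1 + 1 ≤ boost 1 b + ∑ j, (b j + 1 + 1) / 2 := by
  have hγ := boost_eq_one_or_card_even b one_ne_zero
  have hν : 0 < #{j | Even (b j)} := card_pos.2 ⟨j, by simpa using hj⟩
  have := sum_succ_div_two_add_odd b 0
  lia

lemma four_mul_column_le (hk : k ≤ #{j | b j + m = 9}) (hkm : k = 0 ∨ 2 ≤ m) (hl : 4 * l ≤ m) :
    4 * (∑ j, (b j + 1) / 2 + m) + (3 * k + 4 * l) ≤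
      4 * boost m b + 3 * ∑ j, (b j + m + 1) / 2 + ∑ j, b j := by
  have hD := card_mul_le_sum_half b m
  have hK : #{j | b j + m = 9} ≤ 4 := hJ ▸ card_le_univ _
  have hS := sum_eq_sum_half_add b
  obtain ⟨q, rfl | rfl⟩ := Nat.even_or_odd' m
  · have hγ := boost_eq_one_of_card_ne_zero (b := b) (even_two_mul q)
    rw [sum_succ_div_two_add_even, hJ]
    obtain rfl | rfl | rfl | rfl | hq : q = 0 ∨ q = 1 ∨ q = 2 ∨ q = 3 ∨ 4 ≤ q := by lia
    all_goals lia
  · have hγ := boost_eq_one_or_card_even b (Nat.succ_ne_zero (2 * q))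
    have hν := card_le_card_even (b := b) (odd_two_mul_add_one q)
    rw [sum_succ_div_two_add_odd, hJ]
    lia

end Column

/-! ### Counting the pebbles of an unsolvable configuration -/

/-- The condition under which `PairPebbling` moves two pebbles to the root. -/
def Heavy {V : Type*} [Fintype V] (E c : V → ℕ) : Prop := 9 ≤ pairs c ∧ c ≠ E

section Pairs

variable {V : Type*} {E c e : V → ℕ}

lemma two_nsmul_le_of_le_half (he : e ≤ half c) : 2 • e ≤ c := fun g ↦ by
  have := he g
  simp only [half] at this
  simp only [Pi.smul_apply, smul_eq_mul]
  lia

variable [Fintype V]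

lemma pairs_add_two_nsmul (c e : V → ℕ) : pairs (c + 2 • e) = pairs c + ∑ g, e g := by
  rw [pairs, pairs, ← sum_add_distrib]
  refine sum_congr rfl fun g _ ↦ ?_
  simp only [Pi.add_apply, Pi.smul_apply, smul_eq_mul]
  lia

lemma pairs_sub_add (he : e ≤ half c) : pairs (c - 2 • e) + ∑ g, e g = pairs c := by
  rw [← pairs_add_two_nsmul, tsub_add_cancel_of_le (two_nsmul_le_of_le_half he)]

lemma pairs_le_sum (c : V → ℕ) : pairs c ≤ ∑ g, c g := sum_le_sum fun g _ ↦ by lia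

lemma pairs_le_sum_half_add (c : V → ℕ) : pairs c ≤ ∑ g, half c g + Fintype.card V := by
  rw [pairs, ← Finset.card_univ, card_eq_sum_ones, ← sum_add_distrib]
  exact sum_le_sum fun g _ ↦ by simp only [half]; lia

lemma sum_pairs_le {ι : Type*} (hE : pairs E = 9) {s : Finset ι} {f : ι → V → ℕ}
    (h : ∀ i ∈ s, ¬Heavy E (f i)) : ∑ i ∈ s, pairs (f i) ≤ 8 * #s + #{i ∈ s | f i = E} := by
  rw [card_filter, mul_comm, ← smul_eq_mul, ← sum_const, ← sum_add_distrib]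
  refine sum_le_sum fun i hi ↦ ?_
  split_ifs with hc
  · rw [hc, hE]
  · by_contra! hlt
    exact h i hi ⟨hlt, hc⟩

lemma four_mul_card_le {ι : Type*} {z : V} (hz : E z = 9) (s : Finset ι) (f : ι → V → ℕ) :
    4 * #{i ∈ s | f i = E} ≤ ∑ i ∈ s, half (f i) z := by
  rw [mul_comm]
  refine (card_nsmul_le_sum _ _ 4 fun i hi ↦ ?_).trans (sum_le_sum_of_subset (filter_subset ..))
  simp [half, (mem_filter.1 hi).2, hz]

lemma card_add_eq_le {ι : Type*} {z : V} (hz : E z = 9) (s : Finset ι) (f : ι → V → ℕ)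
    (c : V → ℕ) : #{i ∈ s | f i + c = E} ≤ #{i ∈ s | f i z + c z = 9} :=
  card_le_card <| monotone_filter_right _ fun _ _ hi ↦ (congrFun hi z).trans hz

/-- If `11 ≤ c z`, then a tenth pair is kept because the removal could otherwise end at `E`. -/
lemma Heavy.exists_sub {z : V} (hV : Fintype.card V = 8) (hz : E z = 9) (hE : pairs E = 9)
    (h : Heavy E c) : ∃ e ≤ half c, Heavy E (c - 2 • e) ∧
      pairs c ≤ ∑ g, e g + 9 + if 11 ≤ c z then 1 else 0 := by
  have hhalf := pairs_le_sum_half_add c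
  obtain h9 | h10 := h.1.eq_or_lt'
  · exact ⟨0, zero_le, by simpa using h, by lia⟩
  obtain hcz | hcz := le_or_gt 11 (c z)
  · obtain ⟨e, -, he, hsum⟩ := exists_between_sum_eq (zero_le (a := half c)) (m := pairs c - 10)
      (by simp) (by lia)
    have hpairs := pairs_sub_add he
    exact ⟨e, he, ⟨by lia, fun heq ↦ by rw [heq] at hpairs; lia⟩, by rw [if_pos hcz]; lia⟩
  · classical
    have hlo : Pi.single z (min 1 (c z / 2)) ≤ half c := fun g ↦ by
      obtain rfl | hg := eq_or_ne g z <;> simp [half, *]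
    obtain ⟨e, hle, he, hsum⟩ := exists_between_sum_eq hlo (m := pairs c - 9)
      (by simp; lia) (by lia)
    have hpairs := pairs_sub_add he
    have hez : min 1 (c z / 2) ≤ e z := by simpa using hle z
    refine ⟨e, he, ⟨by lia, fun heq ↦ ?_⟩, by lia⟩
    have := congrFun heq z
    simp only [Pi.sub_apply, Pi.smul_apply, smul_eq_mul] at this
    lia

lemma four_mul_card_le_reserve {I : Type*} [Fintype I] {z : V} (hz : E z = 9) (A : I → V → ℕ) :
    4 * #{i | A i = E} ≤ reserve A z := by
  simpa [reserve] using four_mul_card_le hz univ A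

end Pairs

section Blocked

variable {V I J : Type*} [Fintype V] [Fintype I] [DecidableEq I] [Fintype J] {r z : V}
  {E x : V → ℕ} {A : I → V → ℕ} {B : J → V → ℕ} {i : I} {j : J}

/-- The bounds on the parts of `assemble x A B` that hold when no pebble can be moved from it to the
root; see `PairPebbling.blocked`. -/
structure Blocked (E x : V → ℕ) (A : I → V → ℕ) (B : J → V → ℕ) : Prop where
  root : ∑ g, (x g + ∑ j, B j g / 2 + boost (reserve A g) (B · g)) ≤ 7
  near : ∀ j, ¬Heavy E (B j + reserve A)
  far_far : ∀ i i', i ≠ i' → Heavy E (A i) → ¬Heavy E (A i')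
  far_near : ∀ i j f d, A i = f + d → Heavy E f →
    ∑ g, (B j + reserve (Function.update A i d)) g ≤ 7
  near_near : ∀ i j j', j ≠ j' → Heavy E (A i + half (B j)) → ∑ g, B j' g ≤ 7

lemma PairPebbling.blocked [DecidableEq V] [DecidableEq J] [Nonempty J] {G : SimpleGraph V}
    (h : PairPebbling G r z E)
    (hc : ¬Reaches (G □ completeBipartiteGraph (Option I) J) (assemble x A B)
      (Pi.single (r, .inl none) 1)) : Blocked E x A B where
  root := by
    contrapose! hc
    refine (reaches_root_layer_boost x A B).trans ?_
    rw [← layer_single]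
    exact (h.reach_one _ hc).to_layer _
  near j hj := hc <| reaches_root_of_near (h.reach_two _ hj.1 hj.2)
  far_far i i' hi hA hA' := hc <|
    reaches_root_of_far_far hi (h.reach_two _ hA.1 hA.2) (h.reach_two _ hA'.1 hA'.2)
  far_near i j f d hA hf := by
    contrapose! hc
    exact reaches_root_of_far_near hA (h.reach_two f hf.1 hf.2) (h.reach_one _ hc)
  near_near i j j' hj hA := by
    contrapose! hc
    exact reaches_root_of_near_near hj (h.reach_two _ hA.1 hA.2) (h.reach_one _ hc)

namespace Blocked

variable (hb : Blocked E x A B)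
include hb

lemma sum_near_add_le {e : V → ℕ} (he : e ≤ half (A i)) (hi : Heavy E (A i - 2 • e)) (j : J) :
    ∑ g, (B j g + e g + ∑ i' ∈ univ.erase i, half (A i') g) ≤ 7 := by
  have hle := two_nsmul_le_of_le_half he
  convert hb.far_near i j _ (2 • e) (tsub_add_cancel_of_le hle).symm hi using 2 with g
  rw [Pi.add_apply, add_assoc, reserve, Finset.sum_apply, ← add_sum_erase _ _ (mem_univ i)]
  congr 2
  · simp [half]
  · exact sum_congr rfl fun i' hi' ↦ by simp [ne_of_mem_erase hi']

lemma near_add_le (hi : Heavy E (A i)) (j : J) (g : V) :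
    B j g + ∑ i' ∈ univ.erase i, half (A i') g ≤ 7 := by
  have := hb.sum_near_add_le (e := 0) zero_le (by simpa using hi) j
  simp only [Pi.zero_apply, add_zero] at this
  exact (single_le_sum (f := fun g ↦ B j g + ∑ i' ∈ univ.erase i, half (A i') g)
    (fun _ _ ↦ zero_le) (mem_univ g)).trans this

lemma two_le_reserve (hz : E z = 9) (hi : Heavy E (A i)) (hj : B j + reserve A = E) :
    2 ≤ reserve A z := by
  have hjz := congrFun hj z
  have := hb.near_add_le hi j z
  rw [Pi.add_apply] at hjz
  lia

lemma sum_near_add_pairs_le (hV : Fintype.card V = 8) (hz : E z = 9) (hE : pairs E = 9)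
    (hi : Heavy E (A i)) (j : J) :
    ∑ g, B j g + pairs (A i) ≤ 16 + if 11 ≤ A i z then 1 else 0 := by
  obtain ⟨e, he, hsub, hpairs⟩ := hi.exists_sub hV hz hE
  have := hb.sum_near_add_le he hsub j
  simp only [sum_add_distrib] at this
  lia

lemma sum_half_near_le (g : V) : ∑ j, B j g / 2 ≤ 7 := by
  have := (single_le_sum (f := fun g ↦ x g + ∑ j, B j g / 2 + boost (reserve A g) (B · g))
    (fun _ _ ↦ zero_le) (mem_univ g)).trans hb.root
  lia

lemma sum_add_sum_boost_le :
    ∑ g, (x g + ∑ j, B j g + ∑ i, A i g) + ∑ g, boost (reserve A g) (B · g) ≤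
      7 + ∑ g, (∑ j, (B j g + 1) / 2 + reserve A g) + ∑ i, pairs (A i) := by
  simp only [pairs]
  rw [sum_comm (f := fun i g ↦ (A i g + 1) / 2)]
  refine le_trans ?_ (Nat.add_le_add_right (Nat.add_le_add_right hb.root _) _)
  rw [← sum_add_distrib, ← sum_add_distrib, ← sum_add_distrib]
  refine sum_le_sum fun g _ ↦ ?_
  have hB := sum_eq_sum_half_add (B · g)
  have hA := sum_eq_sum_half_add (A · g)
  simp only [reserve, half, Finset.sum_apply]
  lia

lemma sum_pairs_near_le (hJ : Fintype.card J = 4) (hE : pairs E = 9) :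
    ∑ j, pairs (B j + reserve A) ≤ 32 + #{j | B j + reserve A = E} :=
  (sum_pairs_le hE fun j _ ↦ hb.near j).trans_eq (by rw [Finset.card_univ, hJ])

lemma sum_lt_of_heavy (hV : Fintype.card V = 8) (hI : Fintype.card I = 3)
    (hJ : Fintype.card J = 4) (hz : E z = 9) (hE : pairs E = 9) (hi : Heavy E (A i)) :
    ∑ g, (x g + ∑ j, B j g + ∑ i, A i g) < 64 := by
  classical
  set l := #{i' ∈ univ.erase i | A i' = E}
  set k := #{j | B j + reserve A = E}
  set ρ := if 11 ≤ A i z then 1 else 0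
  have hlz : 4 * l ≤ ∑ i' ∈ univ.erase i, half (A i') z := four_mul_card_le hz _ _
  have hreserve : reserve A z = A i z / 2 + ∑ i' ∈ univ.erase i, half (A i') z := by
    rw [reserve, Finset.sum_apply, ← add_sum_erase _ _ (mem_univ i), half]
  have hkz : k = 0 ∨ 2 ≤ reserve A z := by
    refine or_iff_not_imp_left.2 fun h0 ↦ ?_
    obtain ⟨j, hj⟩ := card_ne_zero.1 h0
    exact hb.two_le_reserve hz hi (mem_filter.1 hj).2
  have hcolumn (g : V) : 4 * (∑ j, (B j g + 1) / 2 + reserve A g) +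
      (Pi.single z (3 * k + 4 * (l + ρ)) : V → ℕ) g ≤ 4 * boost (reserve A g) (B · g) +
        3 * ∑ j, (B j g + reserve A g + 1) / 2 + ∑ j, B j g := by
    obtain rfl | hg := eq_or_ne g z
    · rw [Pi.single_eq_same]
      exact four_mul_column_le hJ (card_add_eq_le hz ..) hkz (by lia)
    · rw [Pi.single_eq_of_ne hg]
      exact four_mul_column_le (k := 0) (l := 0) hJ zero_le (.inl rfl) zero_le
  have hsum := sum_le_sum fun g (_ : g ∈ univ) ↦ hcolumn g
  have hroot := hb.sum_add_sum_boost_le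
  have hfar : ∑ i' ∈ univ.erase i, pairs (A i') ≤ 8 * #(univ.erase i) + l :=
    sum_pairs_le hE fun i' hi' ↦ hb.far_far i i' (ne_of_mem_erase hi').symm hi
  have hnear := hb.sum_pairs_near_le hJ hE
  have hfar_near := sum_le_card_nsmul univ _ _ fun j _ ↦ hb.sum_near_add_pairs_le hV hz hE hi j
  rw [card_erase_of_mem (mem_univ i), Finset.card_univ, hI] at hfar
  rw [sum_add_distrib, sum_const, Finset.card_univ, hJ, sum_comm] at hfar_near
  rw [← add_sum_erase _ _ (mem_univ i)] at hroot
  simp only [pairs, sum_add_distrib, ← mul_sum, Fintype.sum_pi_single', smul_eq_mul,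
    Pi.add_apply] at *
  rw [sum_comm (f := fun j g ↦ (B j g + reserve A g + 1) / 2)] at hnear
  lia

lemma sum_add_slack_le {s : V → ℕ} (hs : ∀ g, ∑ j, (B j g + 1) / 2 + reserve A g + s g ≤
      boost (reserve A g) (B · g) + ∑ j, (B j g + reserve A g + 1) / 2) :
    ∑ g, (x g + ∑ j, B j g + ∑ i, A i g) + ∑ g, s g ≤
      7 + ∑ j, pairs (B j + reserve A) + ∑ i, pairs (A i) := by
  have hsum := sum_le_sum fun g (_ : g ∈ univ) ↦ hs g
  have hroot := hb.sum_add_sum_boost_le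
  have hnear : ∑ j, pairs (B j + reserve A) = ∑ g, ∑ j, (B j g + reserve A g + 1) / 2 := sum_comm
  simp only [sum_add_distrib] at *
  lia

lemma column_le_near (hJ : Fintype.card J = 4) (g : V) : ∑ j, (B j g + 1) / 2 + reserve A g ≤
    boost (reserve A g) (B · g) + ∑ j, (B j g + reserve A g + 1) / 2 :=
  column_le (k := 0) (l := 0) hJ zero_le (.inl rfl) zero_le (hb.sum_half_near_le g)

lemma sum_lt_of_reserve_pos (hI : Fintype.card I = 3) (hJ : Fintype.card J = 4) (hz : E z = 9)
    (hE : pairs E = 9) (hA : ∀ i, ¬Heavy E (A i))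
    (hk : #{j | B j + reserve A = E} = 0 ∨ 1 ≤ reserve A z) :
    ∑ g, (x g + ∑ j, B j g + ∑ i, A i g) < 64 := by
  classical
  have hl := four_mul_card_le_reserve hz A
  have hslack := hb.sum_add_slack_le
    (s := Pi.single z (#{j | B j + reserve A = E} + #{i | A i = E})) fun g ↦ by
      obtain rfl | hg := eq_or_ne g z
      · rw [Pi.single_eq_same]
        exact column_le hJ (card_add_eq_le hz ..) hk hl (hb.sum_half_near_le g)
      · rw [Pi.single_eq_of_ne hg]
        exact hb.column_le_near hJ g
  have hnear := hb.sum_pairs_near_le hJ hE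
  have hfar := sum_pairs_le hE fun i (_ : i ∈ univ) ↦ hA i
  rw [Finset.card_univ, hI] at hfar
  rw [Fintype.sum_pi_single'] at hslack
  lia

lemma card_near_le_one (hz : E z = 9) (hAz : reserve A z = 0) :
    #{j | B j + reserve A = E} ≤ 1 := by
  have hcard := card_add_eq_le hz univ B (reserve A)
  rw [hAz] at hcard
  have := (card_mul_le_sum_half (B · z) 0).trans (hb.sum_half_near_le z)
  lia

lemma sum_lt_of_near_ne (hI : Fintype.card I = 3) (hJ : Fintype.card J = 4) (hz : E z = 9)
    (hE : pairs E = 9) (hE1 : ∀ v ≠ z, E v ≤ 1) (hA : ∀ i, ¬Heavy E (A i))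
    (hAz : reserve A z = 0) (hj : B j + reserve A = E) (hne : reserve A ≠ 0) :
    ∑ g, (x g + ∑ j, B j g + ∑ i, A i g) < 64 := by
  classical
  obtain ⟨w, hw⟩ := Function.ne_iff.1 hne
  have hjw := congrFun hj w
  have hEw := hE1 w fun h ↦ hw (h ▸ hAz)
  rw [Pi.add_apply] at hjw
  rw [Pi.zero_apply] at hw
  have hw1 : reserve A w = 1 := by lia
  have hl := four_mul_card_le_reserve hz A
  have hk := hb.card_near_le_one hz hAz
  have hslack := hb.sum_add_slack_le (s := Pi.single w 1) fun g ↦ by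
    obtain rfl | hg := eq_or_ne g w
    · rw [Pi.single_eq_same, hw1]
      exact column_add_one_le hJ (j := j) (by rw [show B j g = 0 by lia]; exact Even.zero)
    · rw [Pi.single_eq_of_ne hg]
      exact hb.column_le_near hJ g
  have hnear := hb.sum_pairs_near_le hJ hE
  have hfar := sum_pairs_le hE fun i (_ : i ∈ univ) ↦ hA i
  rw [Finset.card_univ, hI] at hfar
  rw [Fintype.sum_pi_single'] at hslack
  lia

lemma sum_near_le_of_near_eq (hz : E z = 9) (hE1 : ∀ v ≠ z, E v ≤ 1) (hAz : A i z ≤ 1)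
    (hi : 7 ≤ pairs (A i)) (hj : B j = E) (hne : j' ≠ j) : ∑ g, B j' g ≤ 7 := by
  classical
  have hhalf : half (B j) = 2 • Pi.single z 2 := by
    funext g
    obtain rfl | hg := eq_or_ne g z
    · simp [half, hj, hz]
    · have := hE1 g hg
      simp only [half, hj, Pi.smul_apply, Pi.single_eq_of_ne hg]
      lia
  refine hb.near_near i j j' hne.symm ⟨?_, fun h ↦ ?_⟩
  · rw [hhalf, pairs_add_two_nsmul, Fintype.sum_pi_single']
    lia
  · have := congrFun h z
    rw [hhalf] at this
    simp at this
    lia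

lemma sum_lt_of_near_eq (hI : Fintype.card I = 3) (hJ : Fintype.card J = 4) (hz : E z = 9)
    (hE : pairs E = 9) (hE1 : ∀ v ≠ z, E v ≤ 1) (hA : ∀ i, ¬Heavy E (A i)) (h0 : reserve A = 0)
    (hj : B j = E) : ∑ g, (x g + ∑ j, B j g + ∑ i, A i g) < 64 := by
  classical
  have hAz (i : I) : A i z / 2 = 0 := by
    simpa [half] using (sum_eq_zero_iff_of_nonneg fun _ _ ↦ zero_le).1
      ((Finset.sum_apply ..).symm.trans (congrFun h0 z)) i (mem_univ i)
  have hl := four_mul_card_le_reserve hz A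
  have hk := hb.card_near_le_one hz (congrFun h0 z)
  have hslack := hb.sum_add_slack_le (s := 0) (hb.column_le_near hJ)
  have hnear := hb.sum_pairs_near_le hJ hE
  have hfar := sum_pairs_le hE fun i (_ : i ∈ univ) ↦ hA i
  rw [Finset.card_univ, hI] at hfar
  simp only [h0, Pi.zero_apply, add_zero, sum_const_zero] at *
  by_cases h7 : ∃ i, 7 ≤ pairs (A i)
  · obtain ⟨i, hi⟩ := h7
    have hnear' : ∑ j' ∈ univ.erase j, pairs (B j') ≤ #(univ.erase j) • 7 :=
      sum_le_card_nsmul _ _ _ fun j' hj' ↦ (pairs_le_sum _).trans <|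
        hb.sum_near_le_of_near_eq hz hE1 (by have := hAz i; lia) hi hj (ne_of_mem_erase hj')
    rw [card_erase_of_mem (mem_univ j), Finset.card_univ, hJ, smul_eq_mul] at hnear'
    rw [← add_sum_erase _ _ (mem_univ j), hj, hE] at hslack
    lia
  · push Not at h7
    have hfar' := sum_le_card_nsmul univ _ 6 fun i _ ↦ Nat.le_of_lt_succ (h7 i)
    rw [Finset.card_univ, hI, smul_eq_mul] at hfar'
    lia

lemma sum_lt (hV : Fintype.card V = 8) (hI : Fintype.card I = 3) (hJ : Fintype.card J = 4)
    (hz : E z = 9) (hE : pairs E = 9) (hE1 : ∀ v ≠ z, E v ≤ 1) :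
    ∑ g, (x g + ∑ j, B j g + ∑ i, A i g) < 64 := by
  classical
  by_cases hA : ∃ i, Heavy E (A i)
  · obtain ⟨i, hi⟩ := hA
    exact hb.sum_lt_of_heavy hV hI hJ hz hE hi
  push Not at hA
  by_cases hk : #{j | B j + reserve A = E} = 0 ∨ 1 ≤ reserve A z
  · exact hb.sum_lt_of_reserve_pos hI hJ hz hE hA hk
  push Not at hk
  obtain ⟨j, hj⟩ := card_ne_zero.1 hk.1
  replace hj := (mem_filter.1 hj).2
  by_cases h0 : reserve A = 0
  · exact hb.sum_lt_of_near_eq hI hJ hz hE hE1 hA h0 (by simpa [h0] using hj)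
  · exact hb.sum_lt_of_near_ne hI hJ hz hE hE1 hA (by lia) hj h0

end Blocked
end Blocked

theorem PairPebbling.reaches_root {V I J : Type*} [Fintype V] [DecidableEq V] [Fintype I]
    [DecidableEq I] [Fintype J] [DecidableEq J] {G : SimpleGraph V} {r z : V} {E : V → ℕ}
    (h : PairPebbling G r z E) (hV : Fintype.card V = 8) (hI : Fintype.card I = 3)
    (hJ : Fintype.card J = 4) {c : V × (Option I ⊕ J) → ℕ} (hc : 64 ≤ ∑ v, c v) :
    Reaches (G □ completeBipartiteGraph (Option I) J) c (Pi.single (r, .inl none) 1) := by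
  have : Nonempty J := Fintype.card_pos_iff.1 (by lia)
  by_contra hunsolved
  rw [← assemble_apply_self c] at hunsolved hc
  have := (h.blocked hunsolved).sum_lt hV hI hJ h.apply_self h.pairs_eq h.apply_le_one
  rw [sum_assemble] at hc
  lia

/-! ### Pebbling numbers -/

lemma pebblingNumber_eq_card {V : Type*} [Fintype V] {G : SimpleGraph V}
    (h : ∀ c : V → ℕ, ∑ v, c v = Fintype.card V → ∀ r, Solvable G c r) :
    pebblingNumber G = Fintype.card V := by
  classical
  refine le_antisymm (Nat.sInf_le h) (le_csInf ⟨_, h⟩ fun k hk ↦ ?_)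
  by_contra! hlt
  obtain ⟨r⟩ : Nonempty V := Fintype.card_pos_iff.1 (by lia)
  obtain ⟨s, hs, rfl⟩ := exists_subset_card_eq (s := univ.erase r) (n := k) (by simp; lia)
  obtain ⟨c, hc, hr⟩ := hk (fun v ↦ if v ∈ s then 1 else 0) (by simp) r
  obtain rfl | ⟨d, ⟨v, w, -, hv, -⟩, -⟩ := hc.cases_head
  · have : r ∉ s := fun hrs ↦ ne_of_mem_erase (hs hrs) rfl
    simp [this] at hr
  · dsimp only at hv
    split_ifs at hv <;> lia

lemma exists_equiv_completeBipartiteGraph (h : Fin 4 ⊕ Fin 4) :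
    ∃ e : Option (Fin 3) ⊕ Fin 4 ≃ Fin 4 ⊕ Fin 4, e (.inl none) = h ∧
      completeBipartiteGraph _ _ ≤ (completeBipartiteGraph _ _).comap e := by
  obtain i | j := h
  · refine ⟨(finSuccEquiv' i).symm.sumCongr (.refl _), by simp, ?_⟩
    rintro (_ | _) (_ | _) <;> simp
  · refine ⟨((finSuccEquiv' j).symm.sumCongr (.refl _)).trans (.sumComm _ _), by simp, ?_⟩
    rintro (_ | _) (_ | _) <;> simp

theorem pebblingNumber_boxProd_eq {V W : Type*} [Fintype V] [DecidableEq V] [Fintype W]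
    {G : SimpleGraph V} {H : SimpleGraph W} (hV : Fintype.card V = 8)
    (hG : ∀ r, ∃ z E, PairPebbling G r z E) (e : Fin 4 ⊕ Fin 4 ≃ W)
    (he : completeBipartiteGraph (Fin 4) (Fin 4) ≤ H.comap e) : pebblingNumber (G □ H) = 64 := by
  classical
  have hcard : Fintype.card (V × W) = 64 := by simp [hV, ← Fintype.card_congr e]
  rw [← hcard]
  refine pebblingNumber_eq_card fun c hc ⟨r, w⟩ ↦ Reaches.nsolvable ?_
  obtain ⟨z, E, hr⟩ := hG r
  obtain ⟨e', hw, he'⟩ := exists_equiv_completeBipartiteGraph (e.symm w)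
  let f : V × (Option (Fin 3) ⊕ Fin 4) ≃ V × W := (Equiv.refl V).prodCongr (e'.trans e)
  have hf : ∀ p q, (G □ completeBipartiteGraph (Option (Fin 3)) (Fin 4)).Adj p q →
      (G □ H).Adj (f p) (f q) := by
    rintro ⟨g, k⟩ ⟨g', k'⟩ hadj
    exact hadj.imp (And.imp_right (congrArg (e'.trans e))) (And.imp_left fun h ↦ he (he' h))
  have hfr : f (r, .inl none) = (r, w) := by simp [f, hw]
  rw [← hfr]
  refine .of_equiv f hf (hr.reaches_root hV (by simp) (by simp) ?_)
  rw [← hcard, ← hc]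
  exact (f.sum_comp c).ge

end Pebbling

open Pebbling in
theorem stmt12_general {W : Type*} [Fintype W] {G : SimpleGraph (Fin 8)} {H : SimpleGraph W}
    (hG : G ∈ ({lemkeL, lemkeL1, lemkeL2} : Set (SimpleGraph (Fin 8)))) (e : Fin 4 ⊕ Fin 4 ≃ W)
    (he : completeBipartiteGraph (Fin 4) (Fin 4) ≤ H.comap e) : pebblingNumber (G □ H) = 64 := by
  refine pebblingNumber_boxProd_eq (Fintype.card_fin 8) (fun r ↦ ?_) e he
  obtain rfl | rfl | rfl := hG
  · exact ⟨_, _, pairPebbling_lemkeL r⟩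
  · exact ⟨_, _, pairPebbling_lemkeL1 r⟩
  · exact exists_pairPebbling_lemkeL2 r

/-- for each minimal Lemke graph `G ∈ {L, L₁, L₂}` and `H ∈ {K₈, K_{4,4}}`,
`π(G □ H) = 64`. -/
theorem stmt12 :
    ∀ G ∈ ({lemkeL, lemkeL1, lemkeL2} : Set (SimpleGraph (Fin 8))),
      pebblingNumber (G.boxProd (⊤ : SimpleGraph (Fin 8))) = 64 ∧
      pebblingNumber (G.boxProd (completeBipartiteGraph (Fin 4) (Fin 4))) = 64 := by
  intro G hG
  exact ⟨stmt12_general hG finSumFinEquiv fun _ _ h ↦ (finSumFinEquiv (m := 4)).injective.ne h.ne,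
    stmt12_general hG (.refl _) le_rfl⟩
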